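/- arXiv:2401.10108 — 2 statements merged into one kernel-verified Lean document; each statement's English description precedes it below -/
import Mathlib

section
/- Let ε, ε̇, α, α̇, η ∈ V be given, and suppose σᵉ, σᵛ, A ∈ V satisfy the three pointwise local stationarity equations: (a) Cσ*(σᵉ) + Cm*(A) − ε − η = 0; (b) T·Dσ*(σᵛ) − T·Dm*(A) − T·ε̇ − η = 0; (c) (Cm*)ᵀ(σᵉ) − T·(Dm*)ᵀ(σᵛ) + (C_A* + T·D_A*)(A) + α − T·α̇ = 0. Then, with β := (Dα + T·Cα)⁻¹( Dα(α̇) + Dm(ε̇) + Cα(α) + Cm(ε) + Ĉ(η) ) (note Dα + T·Cα is positive definite, hence invertible), one has σᵉ = Cε(ε) + Cm(α) + (Cε − Cm∘Dα⁻¹∘Dm)(η) − T·Cm(β), σᵛ = Dm(α̇) + Dε(ε̇) + T⁻¹·D_I(η) − Dm(β), and A = Dα(α̇) + Dm(ε̇) − Dα(β). -/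
open scoped RealInnerProductSpace

section Defs

variable {V : Type*} [NormedAddCommGroup V] [InnerProductSpace ℝ V]

/-- Schur complement `A^S := A − B ∘ C⁻¹ ∘ B`. -/
noncomputable def schur (A B C : V →L[ℝ] V) : V →L[ℝ] V :=
  A - B ∘L Ring.inverse C ∘L B

/-- `Ĉ := Cm − Cα ∘ Dα⁻¹ ∘ Dm`. -/
noncomputable def Chat (Cα Cm Dα Dm : V →L[ℝ] V) : V →L[ℝ] V :=
  Cm - Cα ∘L Ring.inverse Dα ∘L Dm

/-- The instantaneous viscosity tensor `D_I := Dε − Dm∘Dα⁻¹∘Dm`. -/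
noncomputable def DInst (Dε Dα Dm : V →L[ℝ] V) : V →L[ℝ] V :=
  Dε - Dm ∘L Ring.inverse Dα ∘L Dm

/-- Conjugate coefficient `Cσ* := (Cε^S)⁻¹` (also used for `Dσ*`). -/
noncomputable def sigStar (Cε Cα Cm : V →L[ℝ] V) : V →L[ℝ] V :=
  Ring.inverse (schur Cε Cm Cα)

/-- Conjugate coefficient `C_A* := (Cα^S)⁻¹` (also used for `D_A*`). -/
noncomputable def AStar (Cε Cα Cm : V →L[ℝ] V) : V →L[ℝ] V :=
  Ring.inverse (schur Cα Cm Cε)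

/-- Conjugate coefficient `Cm* := (Cε^S)⁻¹ ∘ Cm ∘ Cα⁻¹` (also used for `Dm*`). -/
noncomputable def mStar (Cε Cα Cm : V →L[ℝ] V) : V →L[ℝ] V :=
  Ring.inverse (schur Cε Cm Cα) ∘L Cm ∘L Ring.inverse Cα

end Defs

/-! The conjugate coefficients of `(Cε, Cα, Cm)` are the blocks of the inverse of the block operator
`[[Cε, -Cm], [-Cm, Cα]]`, and likewise for `D`. Writing `a := (Cm*)ᵀ σᵉ + C_A* A` and
`b := (Dm*)ᵀ σᵛ - D_A* A`, equations (a) and (b) therefore express `(σᵉ, A)` through `(ε + η, a)`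
and `(σᵛ, -A)` through `(ε̇ + T⁻¹ η, b)`, while (c) reads `a = T (α̇ + b) - α`. Equating the two
resulting expressions for `A` leaves one linear equation with operator `Dα + T Cα`, whose
solution is `β = α̇ + b - T⁻¹ Dα⁻¹ Dm η`. -/

section Ring

variable {R : Type*} [Ring R]

theorem isUnit_one_sub_mul_comm {a b : R} : IsUnit (1 - a * b) ↔ IsUnit (1 - b * a) := by
  simpa [spectrum.mem_iff, not_iff_not] using
    spectrum.unit_mem_mul_comm (R := ℤ) (a := a) (b := b) (r := 1)

theorem isUnit_sub_mul_inverse_mul_comm {p q b c : R} (hp : IsUnit p) (hq : IsUnit q) :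
    IsUnit (p - b * (Ring.inverse q * c)) ↔ IsUnit (q - c * (Ring.inverse p * b)) := by
  have hpb : p - b * (Ring.inverse q * c) =
      p * (1 - (Ring.inverse p * b) * (Ring.inverse q * c)) := by
    rw [mul_sub, mul_one, mul_assoc, Ring.mul_inverse_cancel_left _ _ hp]
  have hqc : q - c * (Ring.inverse p * b) =
      q * (1 - (Ring.inverse q * c) * (Ring.inverse p * b)) := by
    rw [mul_sub, mul_one, mul_assoc, Ring.mul_inverse_cancel_left _ _ hq]
  rw [hpb, hqc, hp.mul_left_iff, hq.mul_left_iff, isUnit_one_sub_mul_comm]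

theorem inverse_sub_mul_inverse_mul_mul {p q b c : R} (hp : IsUnit p) (hq : IsUnit q)
    (hs : IsUnit (p - b * (Ring.inverse q * c))) :
    Ring.inverse (p - b * (Ring.inverse q * c)) * (b * Ring.inverse q) =
      Ring.inverse p * b * Ring.inverse (q - c * (Ring.inverse p * b)) := by
  have hr := (isUnit_sub_mul_inverse_mul_comm hp hq).1 hs
  rw [Ring.inverse_mul_eq_iff_eq_mul _ _ _ hs, ← mul_assoc, Ring.eq_mul_inverse_iff_mul_eq _ _ _ hr]
  simp only [mul_sub, sub_mul, mul_assoc, Ring.inverse_mul_cancel _ hq, mul_one,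
    Ring.mul_inverse_cancel_left _ _ hp]

end Ring

section Definite

variable {𝕜 V : Type*} [RCLike 𝕜] [NormedAddCommGroup V]

theorem isUnit_of_inner_apply_self_ne_zero [InnerProductSpace 𝕜 V]
    [FiniteDimensional 𝕜 V] {P : V →L[𝕜] V}
    (hP : ∀ x : V, x ≠ 0 → inner 𝕜 (P x) x ≠ 0) : IsUnit P := by
  have := FiniteDimensional.complete 𝕜 V
  rw [ContinuousLinearMap.isUnit_iff_isUnit_toLinearMap, LinearMap.isUnit_iff_ker_eq_bot,
    LinearMap.ker_eq_bot']
  intro x hx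
  by_contra hne
  exact hP x hne (by simpa using congrArg (inner 𝕜 · x) hx)

theorem isUnit_of_inner_apply_self_pos [InnerProductSpace ℝ V] [FiniteDimensional ℝ V]
    {P : V →L[ℝ] V} (hP : ∀ x : V, x ≠ 0 → 0 < ⟪P x, x⟫) : IsUnit P :=
  isUnit_of_inner_apply_self_ne_zero fun x hx => (hP x hx).ne'

theorem inner_add_smul_apply_self_pos [InnerProductSpace ℝ V] {P Q : V →L[ℝ] V}
    (hP : ∀ x : V, x ≠ 0 → 0 < ⟪P x, x⟫) (hQ : ∀ x : V, x ≠ 0 → 0 < ⟪Q x, x⟫) {t : ℝ}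
    (ht : 0 < t) (x : V) (hx : x ≠ 0) : 0 < ⟪(P + t • Q) x, x⟫ := by
  simpa [inner_add_left, real_inner_smul_left] using
    add_pos (hP x hx) (mul_pos ht (hQ x hx))

end Definite

section Conjugate

variable {V : Type*} [NormedAddCommGroup V] [InnerProductSpace ℝ V] {P Q B : V →L[ℝ] V}

theorem isUnit_schur_comm (hP : IsUnit P) (hQ : IsUnit Q) :
    IsUnit (schur P B Q) ↔ IsUnit (schur Q B P) :=
  isUnit_sub_mul_inverse_mul_comm hP hQ

theorem mStar_eq_inverse_mul_mul_AStar (hP : IsUnit P) (hQ : IsUnit Q)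
    (hS : IsUnit (schur P B Q)) : mStar P Q B = Ring.inverse P * B * AStar P Q B :=
  inverse_sub_mul_inverse_mul_mul hP hQ hS

theorem mul_mStar_eq_mul_AStar (hP : IsUnit P) (hQ : IsUnit Q) (hS : IsUnit (schur P B Q)) :
    P * mStar P Q B = B * AStar P Q B := by
  rw [mStar_eq_inverse_mul_mul_AStar hP hQ hS, mul_assoc, Ring.mul_inverse_cancel_left _ _ hP]

theorem mul_sigStar_sub_mul_mStar (hP : IsUnit P) (hQ : IsUnit Q) (hS : IsUnit (schur P B Q)) :
    P * sigStar P Q B - B * mStar Q P B = 1 := by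
  have hm : mStar Q P B = Ring.inverse Q * B * sigStar P Q B :=
    mStar_eq_inverse_mul_mul_AStar hQ hP ((isUnit_schur_comm hP hQ).1 hS)
  calc P * sigStar P Q B - B * mStar Q P B
      = schur P B Q * sigStar P Q B := by
        rw [hm, ← mul_assoc, ← sub_mul]
        rfl
    _ = 1 := Ring.mul_inverse_cancel _ hS

theorem eq_sub_of_conjugate_left (hP : IsUnit P) (hQ : IsUnit Q) (hS : IsUnit (schur P B Q))
    {σ A e a : V} (he : sigStar P Q B σ + mStar P Q B A = e)
    (ha : mStar Q P B σ + AStar P Q B A = a) : σ = P e - B a := by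
  have hσ : P (sigStar P Q B σ) - B (mStar Q P B σ) = σ :=
    DFunLike.congr_fun (mul_sigStar_sub_mul_mStar hP hQ hS) σ
  have hA : P (mStar P Q B A) = B (AStar P Q B A) :=
    DFunLike.congr_fun (mul_mStar_eq_mul_AStar hP hQ hS) A
  rw [← he, ← ha, map_add, map_add, hA, add_sub_add_right_eq_sub, hσ]

theorem eq_sub_of_conjugate_right (hP : IsUnit P) (hQ : IsUnit Q) (hS : IsUnit (schur P B Q))
    {σ A e a : V} (he : sigStar P Q B σ + mStar P Q B A = e)
    (ha : mStar Q P B σ + AStar P Q B A = a) : A = Q a - B e :=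
  -- `AStar P Q B` unfolds to `sigStar Q P B`, so swapping `P` and `Q` exchanges the two equations.
  eq_sub_of_conjugate_left hQ hP ((isUnit_schur_comm hP hQ).1 hS)
    ((add_comm _ _).trans ha) ((add_comm _ _).trans he)

theorem isSelfAdjoint_schur [CompleteSpace V] (hP : IsSelfAdjoint P) (hQ : IsSelfAdjoint Q)
    (hB : IsSelfAdjoint B) : IsSelfAdjoint (schur P B Q) := by
  have h := hQ.ringInverse.conjugate B
  rw [hB.star_eq, mul_assoc] at h
  exact hP.sub h

theorem adjoint_mStar [CompleteSpace V] (hP : IsUnit P) (hQ : IsUnit Q)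
    (hS : IsUnit (schur P B Q)) (hPsa : IsSelfAdjoint P) (hQsa : IsSelfAdjoint Q)
    (hBsa : IsSelfAdjoint B) :
    ContinuousLinearMap.adjoint (mStar P Q B) = mStar Q P B := by
  have hAsa : IsSelfAdjoint (AStar P Q B) := (isSelfAdjoint_schur hQsa hPsa hBsa).ringInverse
  rw [mStar_eq_inverse_mul_mul_AStar hP hQ hS, ← ContinuousLinearMap.star_eq_adjoint, star_mul,
    star_mul, hAsa.star_eq, hBsa.star_eq, hPsa.ringInverse.star_eq]
  rfl

end Conjugate

section Rate

variable {V : Type*} [NormedAddCommGroup V] [InnerProductSpace ℝ V] {Cα Cm Dα Dm : V →L[ℝ] V}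
  {T : ℝ}

/-- The rate `β` through which the internal variable enters the explicit solution of the
stationarity equations. It is meaningful only when `Dα + T • Cα` is a unit, since `Ring.inverse`
is `0` on non-units. -/
noncomputable def internalRate (Cα Cm Dα Dm : V →L[ℝ] V) (T : ℝ) (ε εdot α αdot η : V) : V :=
  Ring.inverse (Dα + T • Cα) (Dα αdot + Dm εdot + Cα α + Cm ε + Chat Cα Cm Dα Dm η)

theorem internalRate_eq (hDα : IsUnit Dα) (hM : IsUnit (Dα + T • Cα)) (hT : T ≠ 0)
    {ε εdot α αdot η a b : V} (ha : a = T • (αdot + b) - α)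
    (hA : Cα a - Cm (ε + η) = Dm (εdot + T⁻¹ • η) - Dα b) :
    internalRate Cα Cm Dα Dm T ε εdot α αdot η =
      αdot + b - T⁻¹ • Ring.inverse Dα (Dm η) := by
  set p := Ring.inverse Dα (Dm η) with hp
  have hDp : Dα p = Dm η := DFunLike.congr_fun (Ring.mul_inverse_cancel Dα hDα) (Dm η)
  have hβ : Dα αdot + Dm εdot + Cα α + Cm ε + Chat Cα Cm Dα Dm η =
      (Dα + T • Cα) (αdot + b - T⁻¹ • p) := by
    simp only [ha, Chat, add_apply, sub_apply, smul_apply, ContinuousLinearMap.comp_apply,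
      map_add, map_sub, map_smul, ← hp, hDp, smul_add, inv_smul_smul₀ hT] at hA ⊢
    linear_combination (norm := module) -hA
  rw [internalRate, hβ]
  exact DFunLike.congr_fun (Ring.inverse_mul_cancel _ hM) _

theorem eq_of_primal_system {Cε Dε : V →L[ℝ] V} (hDα : IsUnit Dα) (hM : IsUnit (Dα + T • Cα))
    (hT : T ≠ 0) {ε εdot α αdot η a b σe σv A : V} (ha : a = T • (αdot + b) - α)
    (hσe : σe = Cε (ε + η) - Cm a) (hσv : σv = Dε (εdot + T⁻¹ • η) - Dm b)
    (hAC : A = Cα a - Cm (ε + η)) (hAD : A = Dm (εdot + T⁻¹ • η) - Dα b) :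
    σe = Cε ε + Cm α + (Cε - Cm ∘L Ring.inverse Dα ∘L Dm) η -
        T • Cm (internalRate Cα Cm Dα Dm T ε εdot α αdot η) ∧
      σv = Dm αdot + Dε εdot + T⁻¹ • DInst Dε Dα Dm η -
        Dm (internalRate Cα Cm Dα Dm T ε εdot α αdot η) ∧
      A = Dα αdot + Dm εdot - Dα (internalRate Cα Cm Dα Dm T ε εdot α αdot η) := by
  have hDp : Dα (Ring.inverse Dα (Dm η)) = Dm η :=
    DFunLike.congr_fun (Ring.mul_inverse_cancel Dα hDα) (Dm η)
  rw [internalRate_eq hDα hM hT ha (hAC.symm.trans hAD)]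
  refine ⟨?_, ?_, ?_⟩
  · simp only [hσe, ha, sub_apply, ContinuousLinearMap.comp_apply, map_add, map_sub, map_smul,
      smul_sub, smul_inv_smul₀ hT]
    module
  · simp only [hσv, DInst, sub_apply, ContinuousLinearMap.comp_apply, map_add, map_sub, map_smul]
    module
  · simp only [hAD, map_add, map_sub, map_smul, hDp]
    module

end Rate

theorem stmt11_general {V : Type*} [NormedAddCommGroup V] [InnerProductSpace ℝ V]
    [CompleteSpace V]
    {Cε Cα Cm Dε Dα Dm : V →L[ℝ] V}
    (hCε : IsSelfAdjoint Cε) (hCα : IsSelfAdjoint Cα) (hCm : IsSelfAdjoint Cm)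
    (hDε : IsSelfAdjoint Dε) (hDα : IsSelfAdjoint Dα) (hDm : IsSelfAdjoint Dm)
    (uCε : IsUnit Cε) (uCα : IsUnit Cα) (uCS : IsUnit (schur Cε Cm Cα))
    (uDε : IsUnit Dε) (uDα : IsUnit Dα) (uDS : IsUnit (schur Dε Dm Dα))
    {T : ℝ} (hT : T ≠ 0) (uM : IsUnit (Dα + T • Cα))
    {ε εdot α αdot η σe σv A : V}
    (ha : sigStar Cε Cα Cm σe + mStar Cε Cα Cm A - ε - η = 0)
    (hb : T • sigStar Dε Dα Dm σv - T • mStar Dε Dα Dm A - T • εdot - η = 0)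
    (hc : ContinuousLinearMap.adjoint (mStar Cε Cα Cm) σe -
        T • ContinuousLinearMap.adjoint (mStar Dε Dα Dm) σv +
        (AStar Cε Cα Cm + T • AStar Dε Dα Dm) A + α - T • αdot = 0) :
    σe = Cε ε + Cm α + (Cε - Cm ∘L Ring.inverse Dα ∘L Dm) η -
        T • Cm (internalRate Cα Cm Dα Dm T ε εdot α αdot η) ∧
      σv = Dm αdot + Dε εdot + T⁻¹ • DInst Dε Dα Dm η -
        Dm (internalRate Cα Cm Dα Dm T ε εdot α αdot η) ∧
      A = Dα αdot + Dm εdot - Dα (internalRate Cα Cm Dα Dm T ε εdot α αdot η) := by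
  rw [adjoint_mStar uCε uCα uCS hCε hCα hCm, adjoint_mStar uDε uDα uDS hDε hDα hDm] at hc
  obtain ⟨a, haC⟩ : ∃ a, mStar Cα Cε Cm σe + AStar Cε Cα Cm A = a := ⟨_, rfl⟩
  obtain ⟨b, hbD⟩ : ∃ b, mStar Dα Dε Dm σv + AStar Dε Dα Dm (-A) = b := ⟨_, rfl⟩
  have heC : sigStar Cε Cα Cm σe + mStar Cε Cα Cm A = ε + η := by
    linear_combination (norm := module) ha
  have heD : sigStar Dε Dα Dm σv + mStar Dε Dα Dm (-A) = εdot + T⁻¹ • η := by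
    rw [map_neg, ← sub_eq_add_neg, ← sub_eq_iff_eq_add', eq_inv_smul_iff₀ hT]
    linear_combination (norm := module) hb
  have hab : a = T • (αdot + b) - α := by
    simp only [← haC, ← hbD, map_neg, add_apply, smul_apply] at hc ⊢
    linear_combination (norm := module) hc
  have hσe : σe = Cε (ε + η) - Cm a := eq_sub_of_conjugate_left uCε uCα uCS heC haC
  have hAC : A = Cα a - Cm (ε + η) := eq_sub_of_conjugate_right uCε uCα uCS heC haC
  have hσv : σv = Dε (εdot + T⁻¹ • η) - Dm b := eq_sub_of_conjugate_left uDε uDα uDS heD hbD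
  have hAD : A = Dm (εdot + T⁻¹ • η) - Dα b := by
    rw [← neg_sub, ← neg_eq_iff_eq_neg]
    exact eq_sub_of_conjugate_right uDε uDα uDS heD hbD
  exact eq_of_primal_system uDα uM hT hab hσe hσv hAC hAD

theorem stmt11 {V : Type*} [NormedAddCommGroup V] [InnerProductSpace ℝ V]
    [FiniteDimensional ℝ V]
    (Cε Cα Cm Dε Dα Dm : V →L[ℝ] V)
    (hCε : IsSelfAdjoint Cε) (hCα : IsSelfAdjoint Cα) (hCm : IsSelfAdjoint Cm)
    (hDε : IsSelfAdjoint Dε) (hDα : IsSelfAdjoint Dα) (hDm : IsSelfAdjoint Dm)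
    (hCεpos : ∀ x : V, x ≠ 0 → 0 < ⟪Cε x, x⟫)
    (hCαpos : ∀ x : V, x ≠ 0 → 0 < ⟪Cα x, x⟫)
    (hDεpos : ∀ x : V, x ≠ 0 → 0 < ⟪Dε x, x⟫)
    (hDαpos : ∀ x : V, x ≠ 0 → 0 < ⟪Dα x, x⟫)
    (hCεSpos : ∀ x : V, x ≠ 0 → 0 < ⟪schur Cε Cm Cα x, x⟫)
    (hCαSpos : ∀ x : V, x ≠ 0 → 0 < ⟪schur Cα Cm Cε x, x⟫)
    (hDεSpos : ∀ x : V, x ≠ 0 → 0 < ⟪schur Dε Dm Dα x, x⟫)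
    (hDαSpos : ∀ x : V, x ≠ 0 → 0 < ⟪schur Dα Dm Dε x, x⟫)
    (T : ℝ) (hT : 0 < T)
    (ε εdot α αdot η σe σv A : V)
    (ha : sigStar Cε Cα Cm σe + mStar Cε Cα Cm A - ε - η = 0)
    (hb : T • sigStar Dε Dα Dm σv - T • mStar Dε Dα Dm A - T • εdot - η = 0)
    (hc : ContinuousLinearMap.adjoint (mStar Cε Cα Cm) σe -
        T • ContinuousLinearMap.adjoint (mStar Dε Dα Dm) σv +
        (AStar Cε Cα Cm + T • AStar Dε Dα Dm) A + α - T • αdot = 0) :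
    σe = Cε ε + Cm α + (Cε - Cm ∘L Ring.inverse Dα ∘L Dm) η -
        T • Cm (Ring.inverse (Dα + T • Cα)
          (Dα αdot + Dm εdot + Cα α + Cm ε + Chat Cα Cm Dα Dm η)) ∧
      σv = Dm αdot + Dε εdot + T⁻¹ • DInst Dε Dα Dm η -
        Dm (Ring.inverse (Dα + T • Cα)
          (Dα αdot + Dm εdot + Cα α + Cm ε + Chat Cα Cm Dα Dm η)) ∧
      A = Dα αdot + Dm εdot -
        Dα (Ring.inverse (Dα + T • Cα)
          (Dα αdot + Dm εdot + Cα α + Cm ε + Chat Cα Cm Dα Dm η)) := by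
  have := FiniteDimensional.complete ℝ V
  have isUnit_of_pos {P : V →L[ℝ] V} := isUnit_of_inner_apply_self_pos (P := P)
  exact stmt11_general hCε hCα hCm hDε hDα hDm (isUnit_of_pos hCεpos) (isUnit_of_pos hCαpos)
    (isUnit_of_pos hCεSpos) (isUnit_of_pos hDεpos) (isUnit_of_pos hDαpos) (isUnit_of_pos hDεSpos)
    hT.ne' (isUnit_of_pos (inner_add_smul_apply_self_pos hDαpos hCαpos hT)) ha hb hc
end

section
/- For every κ ∈ I, one has M″(κ)·E′(κ) − M′(κ)·E″(κ) = M′(κ)² ≥ 0, i.e., the numerator of the signed curvature of the L-curve κ ↦ (E(κ), M(κ)) is nonnegative (the L-curve is a convex arc). Moreover E′(κ) = −κ·M′(κ); hence, for κ ∈ I with κ > 0, if M′(κ) ≤ 0 then E′(κ) ≥ 0, so E is nondecreasing wherever M is nonincreasing. -/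
/-!
Stationarity says that the velocity `(E', M')` of the L-curve is the multiple `M' • (-κ, 1)` of an
explicit vector field. A Wronskian is multiplied by `q ^ 2` when both of its entries are multiplied
by `q`, so the curvature numerator is `M' ^ 2` times the Wronskian of `(-κ, 1)`, which is `1`.
-/

theorem wronskian_of_eqOn_mul {𝕜 𝔸 : Type*} [NontriviallyNormedField 𝕜] [NormedCommRing 𝔸]
    [NormedAlgebra 𝕜 𝔸] {s : Set 𝕜} {x : 𝕜} {f g φ : 𝕜 → 𝔸} {f' g' φ' : 𝔸}
    (hs : UniqueDiffWithinAt 𝕜 s x) (hx : x ∈ s) (hf : HasDerivWithinAt f f' s x)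
    (hg : HasDerivWithinAt g g' s x) (hφ : HasDerivWithinAt φ φ' s x)
    (hgf : Set.EqOn g (φ * f) s) :
    f' * g x - f x * g' = -φ' * f x ^ 2 := by
  have hval : g x = φ x * f x := hgf hx
  have hderiv : g' = φ' * f x + φ x * f' :=
    hs.eq_deriv s hg ((hφ.mul hf).congr hgf hval)
  rw [hval, hderiv]
  ring

theorem stmt17_general {𝕜 : Type*} [NontriviallyNormedField 𝕜] [LinearOrder 𝕜]
    [IsStrictOrderedRing 𝕜] {s : Set 𝕜} (hs : UniqueDiffOn 𝕜 s) {E M E' M' E'' M'' : 𝕜 → 𝕜}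
    (hE : ∀ κ ∈ s, HasDerivWithinAt E (E' κ) s κ)
    (hE' : ∀ κ ∈ s, HasDerivWithinAt E' (E'' κ) s κ)
    (hM : ∀ κ ∈ s, HasDerivWithinAt M (M' κ) s κ)
    (hM' : ∀ κ ∈ s, HasDerivWithinAt M' (M'' κ) s κ)
    (hstat : ∀ κ ∈ s, E' κ + κ * M' κ = 0) :
    ∀ κ ∈ s,
      (M'' κ * E' κ - M' κ * E'' κ = M' κ ^ 2 ∧ 0 ≤ M' κ ^ 2) ∧
        E' κ = -κ * M' κ ∧
          (0 < κ → M' κ ≤ 0 → 0 ≤ E' κ) := by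
  intro κ hκ
  have velocity_eq : Set.EqOn E' ((fun t ↦ -t) * M') s := fun t ht ↦
    (eq_neg_of_add_eq_zero_left (hstat t ht)).trans (neg_mul t (M' t)).symm
  have numerator_eq : M'' κ * E' κ - M' κ * E'' κ = M' κ ^ 2 := by
    simpa only [neg_neg, one_mul] using
      wronskian_of_eqOn_mul (hs κ hκ) hκ (hM' κ hκ) (hE' κ hκ) (hasDerivWithinAt_neg κ s)
        velocity_eq
  refine ⟨⟨numerator_eq, sq_nonneg _⟩, velocity_eq hκ, fun hκ_pos hM'_nonpos ↦ ?_⟩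
  calc
    0 ≤ -κ * M' κ := mul_nonneg_of_nonpos_of_nonpos (neg_nonpos.mpr hκ_pos.le) hM'_nonpos
    _ = E' κ := (velocity_eq hκ).symm

theorem stmt17 (a b : ℝ) (E M E' M' E'' M'' : ℝ → ℝ)
    (hE : ∀ κ ∈ Set.Ioo a b, HasDerivAt E (E' κ) κ)
    (hE' : ∀ κ ∈ Set.Ioo a b, HasDerivAt E' (E'' κ) κ)
    (hM : ∀ κ ∈ Set.Ioo a b, HasDerivAt M (M' κ) κ)
    (hM' : ∀ κ ∈ Set.Ioo a b, HasDerivAt M' (M'' κ) κ)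
    (hstat : ∀ κ ∈ Set.Ioo a b, E' κ + κ * M' κ = 0) :
    ∀ κ ∈ Set.Ioo a b,
      (M'' κ * E' κ - M' κ * E'' κ = M' κ ^ 2 ∧ 0 ≤ M' κ ^ 2) ∧
        E' κ = -κ * M' κ ∧
          (0 < κ → M' κ ≤ 0 → 0 ≤ E' κ) := by
  exact stmt17_general (uniqueDiffOn_Ioo a b) (fun κ hκ ↦ (hE κ hκ).hasDerivWithinAt)
    (fun κ hκ ↦ (hE' κ hκ).hasDerivWithinAt) (fun κ hκ ↦ (hM κ hκ).hasDerivWithinAt)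
    (fun κ hκ ↦ (hM' κ hκ).hasDerivWithinAt) hstat
end
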